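/- Let α > 0, β > 0, L = 2π/α, M ≥ 1, and let γ ≥ 1 be real. Let V : ℝ → Matrix(M, M, ℂ) be continuous and L-periodic with V(x) Hermitian and positive semidefinite for every x. Suppose φ_1, …, φ_N : ℝ → ℂ^M are C² functions, L-periodic, orthonormal in L²((0, L); ℂ^M), and for each n there is λ_n > 0 such that −φ_n''(x) + α² β φ_n(x) − V(x) φ_n(x) = −λ_n φ_n(x) for all x. Then ∑_{n=1}^N λ_n^γ ≤ (π/√3) · K₁(β) · (Γ(γ+1)/(2√π · Γ(γ+3/2))) · ∫_0^L Tr[V(x)^{γ + 1/2}] dx. -/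

import Mathlib

open Real MeasureTheory ComplexOrder

/-- The sharp constant `K₁(β) = sup_{λ>0} √λ · coth(π√(β+λ)) / √(β+λ)`. -/
noncomputable def K1 (β : ℝ) : ℝ :=
  ⨆ l : Set.Ioi (0 : ℝ),
    Real.sqrt l * (Real.cosh (π * Real.sqrt (β + l)) / Real.sinh (π * Real.sqrt (β + l))) /
      Real.sqrt (β + l)

lemma green_aux (f f' : ℝ → ℂ) (hf : ∀ x, HasDerivAt f (f' x) x) (hc : Continuous f')
    (L : ℝ) (hL : 0 < L) (hper : Function.Periodic f L) (m : ℝ) (hm : 0 < m) (a : ℝ) :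
    2 * m * (sinh (m * L / 2) / cosh (m * L / 2)) * ‖f a‖ ^ 2 ≤
      ∫ x in (0:ℝ)..L, (‖f' x‖ ^ 2 + m ^ 2 * ‖f x‖ ^ 2) := by
  have hfc : Continuous f := continuous_iff_continuousAt.2 fun x => (hf x).continuousAt
  have hper' : Function.Periodic f' L := by
    intro x
    have h1 : HasDerivAt (fun y => f (y + L)) (f' (x + L)) x := (hf (x+L)).comp_add_const x L
    have h2 : (fun y => f (y + L)) = f := funext hper
    rw [h2] at h1
    exact h1.unique (hf x)
  have hP : Function.Periodic (fun x => ‖f' x‖ ^ 2 + m ^ 2 * ‖f x‖ ^ 2) L := by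
    intro x; simp only [hper x, hper' x]
  have e1 := hP.intervalIntegral_add_eq 0 a
  rw [zero_add] at e1
  rw [e1]
  set g : ℝ → ℝ := fun x => m * (sinh (m * (x - a - L/2)) / cosh (m * (x - a - L/2))) with hg
  have hgd : ∀ x, HasDerivAt g (m ^ 2 - g x ^ 2) x := by
    intro x
    have h0 : HasDerivAt (fun x : ℝ => m * (x - a - L/2)) m x := by
      simpa using (((hasDerivAt_id x).sub_const a).sub_const (L/2)).const_mul m
    have hne := (Real.cosh_pos (m * (x - a - L/2))).ne'
    have h3 := ((h0.sinh).div (h0.cosh) hne).const_mul m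
    refine h3.congr_deriv ?_
    simp only [hg]
    field_simp
  have hG : ∀ x, HasDerivAt (fun x => g x * ‖f x‖ ^ 2)
      ((m ^ 2 - g x ^ 2) * ‖f x‖ ^ 2 + g x * (2 * inner ℝ (f x) (f' x))) x := by
    intro x
    exact (hgd x).mul (hf x).norm_sq
  have hgc : Continuous g := continuous_iff_continuousAt.2 fun x => (hgd x).continuousAt
  have key := intervalIntegral.integral_eq_sub_of_hasDerivAt (a := a) (b := a + L)
    (fun x _ => hG x) (by apply Continuous.intervalIntegrable; fun_prop)
  have e2 : g (a + L) * ‖f (a+L)‖ ^ 2 - g a * ‖f a‖ ^ 2 =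
      2 * m * (sinh (m * L / 2) / cosh (m * L / 2)) * ‖f a‖ ^ 2 := by
    rw [hper a]
    have : m * (a + L - a - L/2) = m * L / 2 := by ring
    have h' : m * (a - a - L/2) = - (m * L / 2) := by ring
    simp only [hg, this, h', sinh_neg, cosh_neg]
    ring
  rw [← e2, ← key]
  apply intervalIntegral.integral_mono_on (by linarith)
  · apply Continuous.intervalIntegrable; fun_prop
  · apply Continuous.intervalIntegrable; fun_prop
  · intro x _
    have h1 := abs_real_inner_le_norm (f x) (f' x)
    have h2 : g x * inner ℝ (f x) (f' x) ≤ |g x| * (‖f x‖ * ‖f' x‖) := by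
      refine (le_abs_self _).trans ?_
      rw [abs_mul]
      gcongr
    nlinarith [sq_nonneg (|g x| * ‖f x‖ - ‖f' x‖), sq_abs (g x)]

lemma K1_bdd (β : ℝ) (hβ : 0 < β) : BddAbove (Set.range fun l : Set.Ioi (0 : ℝ) =>
    Real.sqrt l * (Real.cosh (π * Real.sqrt (β + l)) / Real.sinh (π * Real.sqrt (β + l))) /
      Real.sqrt (β + l)) := by
  refine ⟨1 + 1 / sinh (π * √β), ?_⟩
  rintro _ ⟨⟨l, hl⟩, rfl⟩
  simp only [Set.mem_Ioi] at hl ⊢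
  have hs : 0 < sinh (π * √β) := sinh_pos_iff.2 (by positivity)
  have hs2 : sinh (π * √β) ≤ sinh (π * √(β + l)) := by
    apply sinh_le_sinh.2
    gcongr
    linarith
  have h3 : cosh (π * √(β + l)) ≤ sinh (π * √(β + l)) + 1 := by
    have := Real.cosh_sub_sinh (π * √(β + l))
    have h : rexp (-(π * √(β + l))) ≤ 1 := by
      apply Real.exp_le_one_iff.2
      have : 0 ≤ π * √(β + l) := by positivity
      linarith
    linarith
  have h4 : cosh (π * √(β + l)) / sinh (π * √(β + l)) ≤ 1 + 1 / sinh (π * √β) := by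
    calc _ ≤ (sinh (π * √(β + l)) + 1) / sinh (π * √(β + l)) := by
            have := hs.trans_le hs2
            gcongr
      _ = 1 + 1 / sinh (π * √(β + l)) := by
            rw [add_div, div_self (hs.trans_le hs2).ne']
      _ ≤ _ := by gcongr
  rw [div_le_iff₀ (by positivity), mul_comm]
  have h5 : √l ≤ √(β + l) := Real.sqrt_le_sqrt (by linarith)
  exact mul_le_mul h4 h5 (by positivity) (by positivity)

lemma K1_ge (β : ℝ) (hβ : 0 < β) (l : ℝ) (hl : 0 < l) :
    Real.sqrt l * (Real.cosh (π * Real.sqrt (β + l)) / Real.sinh (π * Real.sqrt (β + l))) /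
      Real.sqrt (β + l) ≤ K1 β :=
  le_ciSup (K1_bdd β hβ) (⟨l, hl⟩ : Set.Ioi (0:ℝ))

lemma K1_pos (β : ℝ) (hβ : 0 < β) : 0 < K1 β := by
  refine lt_of_lt_of_le ?_ (K1_ge β hβ 1 one_pos)
  have : 0 < sinh (π * √(β + 1)) := sinh_pos_iff.2 (by positivity)
  have := Real.cosh_pos (π * √(β + 1))
  positivity

lemma interp_aux (α β : ℝ) (hα : 0 < α) (hβ : 0 < β) (L : ℝ) (hL : L = 2 * π / α)
    (f f' : ℝ → ℂ) (hf : ∀ x, HasDerivAt f (f' x) x) (hc : Continuous f')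
    (hper : Function.Periodic f L) (s : ℝ) (hs : 0 < s) (a : ℝ) :
    ‖f a‖ ^ 2 ≤ K1 β / (2 * s) *
      ∫ x in (0:ℝ)..L, (‖f' x‖ ^ 2 + (α ^ 2 * β + s ^ 2) * ‖f x‖ ^ 2) := by
  have hLp : 0 < L := by rw [hL]; positivity
  set l := s ^ 2 / α ^ 2 with hl
  have hlp : 0 < l := by positivity
  have hsl : √l = s / α := by
    rw [hl, ← div_pow, Real.sqrt_sq (by positivity)]
  have hK := K1_ge β hβ l hlp
  set r := √(β + l) with hr
  have hrp : 0 < r := by positivity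
  have hr2 : r ^ 2 = β + l := Real.sq_sqrt (by positivity)
  have hG := green_aux f f' hf hc L hLp hper (α * r) (by positivity) a
  have e1 : α * r * L / 2 = π * r := by rw [hL]; field_simp
  have e2 : (α * r) ^ 2 = α ^ 2 * β + s ^ 2 := by
    rw [mul_pow, hr2, hl]; field_simp
  rw [e1, e2] at hG
  have hsp : 0 < sinh (π * r) := sinh_pos_iff.2 (by positivity)
  have hcp := cosh_pos (π * r)
  set I := ∫ x in (0:ℝ)..L, (‖f' x‖ ^ 2 + (α ^ 2 * β + s ^ 2) * ‖f x‖ ^ 2) with hI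
  have hI0 : 0 ≤ I := intervalIntegral.integral_nonneg hLp.le (fun x _ => by positivity)
  rw [hsl] at hK
  have h5 : ‖f a‖ ^ 2 ≤ (cosh (π * r) / sinh (π * r)) / (2 * (α * r)) * I := by
    calc ‖f a‖ ^ 2 = (cosh (π * r) / sinh (π * r)) / (2 * (α * r)) *
          (2 * (α * r) * (sinh (π * r) / cosh (π * r)) * ‖f a‖ ^ 2) := by field_simp
      _ ≤ _ := by gcongr
  refine h5.trans ?_
  gcongr ?_ * I
  calc _ = s / α * (cosh (π * r) / sinh (π * r)) / r / (2 * s) := by field_simp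
    _ ≤ _ := by gcongr

lemma young_aux (K w u : ℝ) (hK : 0 < K) (hw : 0 ≤ w) (hu : 0 ≤ u) :
    w * u ≤ u ^ 3 / K ^ 2 + 2 * K / (3 * √3) * w ^ (3 / 2 : ℝ) := by
  have h3 : w ^ (3 / 2 : ℝ) = √w ^ 3 := by
    rw [Real.sqrt_eq_rpow, ← Real.rpow_natCast, ← Real.rpow_mul hw]; norm_num
  have hsq3 : √3 ^ 2 = 3 := Real.sq_sqrt (by norm_num)
  have h3p : 0 < √3 := by positivity
  obtain ⟨p, hp⟩ : ∃ p, p = √w * K / √3 := ⟨_, rfl⟩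
  have hp0 : 0 ≤ p := by rw [hp]; positivity
  have hsw : √w = p * √3 / K := by rw [hp]; field_simp
  have hw2 : w = 3 * p ^ 2 / K ^ 2 := by
    rw [← Real.sq_sqrt hw, hsw, div_pow, mul_pow, hsq3]; ring
  have e2 : 2 * K / (3 * √3) * w ^ (3 / 2 : ℝ) = 2 * p ^ 3 / K ^ 2 := by
    rw [h3, hsw]
    have : √3 ^ 3 = 3 * √3 := by rw [pow_succ, hsq3]
    rw [div_pow, mul_pow, this]
    field_simp
  rw [e2, hw2, ← add_div, div_mul_eq_mul_div]
  gcongr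
  nlinarith [mul_nonneg (sq_nonneg (u - p)) (by linarith : 0 ≤ u + 2 * p)]

section LA
variable {M : ℕ} {A : Matrix (Fin M) (Fin M) ℂ} (hA : A.IsHermitian)

/-- coefficient functional -/
noncomputable def coef (k : Fin M) (p : Fin M → ℂ) : ℂ :=
  inner ℂ (hA.eigenvectorBasis k) (WithLp.toLp 2 p)

lemma coef_sum {ι : Type*} [Fintype ι] (k : Fin M) (a : ι → ℂ) (p : ι → Fin M → ℂ) :
    coef hA k (fun j => ∑ i, a i * p i j) = ∑ i, a i * coef hA k (p i) := by
  unfold coef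
  have : (WithLp.toLp 2 (fun j => ∑ i, a i * p i j) : EuclideanSpace ℂ (Fin M)) =
      ∑ i, a i • WithLp.toLp 2 (p i) := by
    ext j; simp
  rw [this, inner_sum]
  simp [inner_smul_right]

lemma coef_parseval (p q : Fin M → ℂ) :
    ∑ k, coef hA k p * (starRingEnd ℂ) (coef hA k q) = ∑ j, p j * (starRingEnd ℂ) (q j) := by
  have := hA.eigenvectorBasis.sum_inner_mul_inner (WithLp.toLp 2 q) (WithLp.toLp 2 p)
  rw [EuclideanSpace.inner_eq_star_dotProduct] at this
  simp only [dotProduct, Pi.star_apply, RCLike.star_def] at this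
  rw [← this]
  refine Finset.sum_congr rfl fun k _ => ?_
  rw [coef, coef, inner_conj_symm, mul_comm]

lemma coef_cs (k : Fin M) (p : Fin M → ℂ) : ‖coef hA k p‖ ^ 2 ≤ ∑ j, ‖p j‖ ^ 2 := by
  have h := norm_inner_le_norm (𝕜 := ℂ) (hA.eigenvectorBasis k) (WithLp.toLp 2 p)
  rw [hA.eigenvectorBasis.orthonormal.1 k, one_mul] at h
  have h2 : ‖(WithLp.toLp 2 p : EuclideanSpace ℂ (Fin M))‖ ^ 2 = ∑ j, ‖p j‖ ^ 2 := by
    rw [EuclideanSpace.norm_sq_eq]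
  rw [← h2]
  unfold coef
  gcongr

lemma coef_mulVec (k : Fin M) (p : Fin M → ℂ) :
    coef hA k (A.mulVec p) = hA.eigenvalues k * coef hA k p := by
  unfold coef
  rw [EuclideanSpace.inner_eq_star_dotProduct, EuclideanSpace.inner_eq_star_dotProduct]
  have h := hA.mulVec_eigenvectorBasis k
  have h2 : (A.mulVec p) ⬝ᵥ star (hA.eigenvectorBasis k).ofLp =
      p ⬝ᵥ star (A.mulVec (hA.eigenvectorBasis k).ofLp) := by
    rw [Matrix.star_mulVec, hA.eq, dotProduct_comm, Matrix.dotProduct_mulVec, dotProduct_comm]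
  simp only [h2, h]
  simp [dotProduct, Finset.mul_sum]
  refine Finset.sum_congr rfl fun _ _ => by ring

lemma coef_quad (p : Fin M → ℂ) :
    (∑ j, A.mulVec p j * (starRingEnd ℂ) (p j)).re = ∑ k, hA.eigenvalues k * ‖coef hA k p‖ ^ 2 := by
  rw [← coef_parseval hA, Complex.re_sum]
  refine Finset.sum_congr rfl fun k _ => ?_
  rw [coef_mulVec, mul_assoc, Complex.mul_conj, ← Complex.ofReal_mul, Complex.ofReal_re,
    Complex.normSq_eq_norm_sq]

lemma coef_norm (p : Fin M → ℂ) :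
    ∑ k, ‖coef hA k p‖ ^ 2 = (∑ j, p j * (starRingEnd ℂ) (p j)).re := by
  rw [← coef_parseval hA, Complex.re_sum]
  refine Finset.sum_congr rfl fun k _ => ?_
  rw [Complex.mul_conj, Complex.ofReal_re, Complex.normSq_eq_norm_sq]

lemma trace_cfc_aux (f : ℝ → ℝ) : (cfc f A).trace = ((∑ i, f (hA.eigenvalues i) : ℝ) : ℂ) := by
  rw [hA.cfc_eq, Matrix.IsHermitian.cfc, Unitary.conjStarAlgAut_apply, Matrix.trace_mul_cycle]
  simp
end LA

open scoped Matrix.Norms.L2Operator in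
lemma cont_eig {M : ℕ} (V : ℝ → Matrix (Fin M) (Fin M) ℂ) (hVc : Continuous V)
    (hV : ∀ x, (V x).PosSemidef) (f : ℝ → ℝ) (hf : Continuous f) :
    Continuous fun x => ∑ i, f ((hV x).1.eigenvalues i) := by
  have h1 : Continuous fun x => cfc f (V x) :=
    Continuous.cfc_of_mem_nhdsSet (p := IsSelfAdjoint) (s := Set.univ) f Filter.univ_mem hVc
      (fun x => (hV x).1) hf.continuousOn
  have h2 := Complex.continuous_re.comp h1.matrix_trace
  convert h2 using 2 with x
  simp only [Function.comp]
  rw [trace_cfc_aux (hV x).1, Complex.ofReal_re]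

lemma quad_aux {ι : Type*} [Fintype ι] {M : ℕ} (L : ℝ) (a : ι → ℝ → Fin M → ℂ)
    (ha : ∀ n j, Continuous fun y => a n y j) (ξ : ι → ℂ) :
    ∫ y in (0:ℝ)..L, ∑ c, ‖∑ i, ξ i * a i y c‖ ^ 2 =
      (∑ i, ∑ j, ξ i * (starRingEnd ℂ) (ξ j) *
        ∫ y in (0:ℝ)..L, ∑ c, a i y c * (starRingEnd ℂ) (a j y c)).re := by
  have e : ∀ y, ∑ c, ‖∑ i, ξ i * a i y c‖ ^ 2 = (∑ i, ∑ j, ξ i * (starRingEnd ℂ) (ξ j) *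
      ∑ c, a i y c * (starRingEnd ℂ) (a j y c)).re := by
    intro y
    have : ∑ i, ∑ j, ξ i * (starRingEnd ℂ) (ξ j) * ∑ c, a i y c * (starRingEnd ℂ) (a j y c) =
        ∑ c, (∑ i, ξ i * a i y c) * (starRingEnd ℂ) (∑ i, ξ i * a i y c) := by
      simp only [map_sum, Finset.sum_mul_sum]
      rw [Finset.sum_comm (s := (Finset.univ : Finset (Fin M)))]
      refine Finset.sum_congr rfl fun i _ => ?_
      rw [Finset.sum_comm (s := (Finset.univ : Finset (Fin M)))]
      refine Finset.sum_congr rfl fun j _ => ?_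
      rw [Finset.mul_sum]
      refine Finset.sum_congr rfl fun c _ => ?_
      rw [map_mul]
      ring
    rw [this, Complex.re_sum]
    refine Finset.sum_congr rfl fun c _ => ?_
    rw [Complex.mul_conj, Complex.ofReal_re, Complex.normSq_eq_norm_sq]
  simp only [e]
  have hI : ∀ i j, IntervalIntegrable (fun y => ξ i * (starRingEnd ℂ) (ξ j) *
      ∑ c, a i y c * (starRingEnd ℂ) (a j y c)) volume 0 L := by
    intro i j
    apply Continuous.intervalIntegrable
    have := Complex.continuous_conj
    fun_prop
  have hcr := Complex.reCLM.intervalIntegral_comp_comm (μ := volume) (a := 0) (b := L)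
    (f := fun y => ∑ i, ∑ j, ξ i * (starRingEnd ℂ) (ξ j) *
      ∑ c, a i y c * (starRingEnd ℂ) (a j y c))
    (by
      apply Continuous.intervalIntegrable
      have := Complex.continuous_conj
      fun_prop)
  simp only [Complex.reCLM_apply] at hcr
  rw [hcr]
  congr 1
  rw [intervalIntegral.integral_finsetSum]
  · refine Finset.sum_congr rfl fun i _ => ?_
    rw [intervalIntegral.integral_finsetSum (fun j _ => hI i j)]
    refine Finset.sum_congr rfl fun j _ => ?_
    rw [intervalIntegral.integral_const_mul]
  · intro i _
    apply Continuous.intervalIntegrable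
    have := Complex.continuous_conj
    fun_prop

lemma cube_aux {ι : Type*} [Fintype ι] [DecidableEq ι] {M : ℕ} (α β : ℝ) (hα : 0 < α) (hβ : 0 < β)
    (L : ℝ) (hL : L = 2 * π / α)
    (φ ψ : ι → ℝ → Fin M → ℂ)
    (hd : ∀ n j y, HasDerivAt (fun y => φ n y j) (ψ n y j) y)
    (hc : ∀ n j, Continuous (fun y => ψ n y j))
    (hper : ∀ n, Function.Periodic (φ n) L)
    (hortho : ∀ n m, (∫ x in (0:ℝ)..L, ∑ j, φ n x j * (starRingEnd ℂ) (φ m x j)) =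
      if n = m then 1 else 0)
    (x : ℝ) {A : Matrix (Fin M) (Fin M) ℂ} (hA : A.IsHermitian) (k : Fin M) :
    (∑ n, ‖coef hA k (φ n x)‖ ^ 2) ^ 3 ≤ K1 β ^ 2 *
      (∑ i, ∑ j, (starRingEnd ℂ) (coef hA k (φ i x)) * coef hA k (φ j x) *
        ((∫ y in (0:ℝ)..L, ∑ c, ψ i y c * (starRingEnd ℂ) (ψ j y c)) +
          if i = j then ((α ^ 2 * β : ℝ) : ℂ) else 0)).re := by
  have hLp : 0 < L := by rw [hL]; positivity
  have hφc : ∀ n j, Continuous (fun y => φ n y j) := fun n j =>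
    continuous_iff_continuousAt.2 fun y => (hd n j y).continuousAt
  set ξ : ι → ℂ := fun n => (starRingEnd ℂ) (coef hA k (φ n x)) with hξ
  set u : ℝ := ∑ n, ‖coef hA k (φ n x)‖ ^ 2 with hu
  have hu0 : 0 ≤ u := by positivity
  have hK := K1_pos β hβ
  have q1 := quad_aux L φ hφc ξ
  have q2 := quad_aux L ψ hc ξ
  have hq1 : (∑ i, ∑ j, ξ i * (starRingEnd ℂ) (ξ j) *
        ∫ y in (0:ℝ)..L, ∑ c, φ i y c * (starRingEnd ℂ) (φ j y c)).re = u := by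
    simp only [hortho, mul_ite, mul_one, mul_zero, Finset.sum_ite_eq, Finset.mem_univ, if_true]
    rw [Complex.re_sum, hu]
    refine Finset.sum_congr rfl fun n _ => ?_
    rw [Complex.mul_conj, Complex.ofReal_re, Complex.normSq_eq_norm_sq, hξ]
    simp
  rw [hq1] at q1
  set Q2 := ∫ y in (0:ℝ)..L, ∑ c, ‖∑ i, ξ i * ψ i y c‖ ^ 2 with hQ2
  have hQ20 : 0 ≤ Q2 := intervalIntegral.integral_nonneg hLp.le (fun x _ => by positivity)
  have hQ : (∑ i, ∑ j, (starRingEnd ℂ) (coef hA k (φ i x)) * coef hA k (φ j x) *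
        ((∫ y in (0:ℝ)..L, ∑ c, ψ i y c * (starRingEnd ℂ) (ψ j y c)) +
          if i = j then ((α ^ 2 * β : ℝ) : ℂ) else 0)).re = Q2 + α ^ 2 * β * u := by
    rw [q2, ← hq1]
    simp only [hortho, mul_add, Finset.sum_add_distrib, Complex.add_re, hξ, Complex.conj_conj]
    congr 1
    rw [← Complex.re_ofReal_mul]
    congr 1
    rw [Finset.mul_sum]
    refine Finset.sum_congr rfl fun n _ => ?_
    simp [mul_comm]
  rw [hQ]
  rcases hu0.eq_or_lt with h0 | hup
  · rw [← h0, mul_zero, add_zero, zero_pow (by norm_num)]; positivity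
  -- interpolation
  have hint : ∀ s : ℝ, 0 < s → u ^ 2 ≤ K1 β / (2 * s) * (Q2 + (α ^ 2 * β + s ^ 2) * u) := by
    intro s hs
    have h1 : u = coef hA k (fun j => ∑ i, ξ i * φ i x j) := by
      rw [coef_sum, hu, Complex.ofReal_sum]
      refine Finset.sum_congr rfl fun n _ => ?_
      simp only [hξ]
      rw [mul_comm, Complex.mul_conj, Complex.normSq_eq_norm_sq]
    have h2 : u ^ 2 ≤ ∑ j, ‖∑ i, ξ i * φ i x j‖ ^ 2 := by
      have := coef_cs hA k (fun j => ∑ i, ξ i * φ i x j)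
      rw [← h1, Complex.norm_real, Real.norm_eq_abs, sq_abs] at this
      exact this
    have h3 : ∀ j, ‖∑ i, ξ i * φ i x j‖ ^ 2 ≤ K1 β / (2 * s) *
      ∫ y in (0:ℝ)..L, (‖∑ i, ξ i * ψ i y j‖ ^ 2 + (α ^ 2 * β + s ^ 2) *
        ‖∑ i, ξ i * φ i y j‖ ^ 2) := by
      intro j
      apply interp_aux α β hα hβ L hL (fun y => ∑ i, ξ i * φ i y j) (fun y => ∑ i, ξ i * ψ i y j)
      · intro y
        apply HasDerivAt.fun_sum
        intro i _
        exact (hd i j y).const_mul _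
      · fun_prop
      · intro y
        simp only [hper _ y]
      · exact hs
    refine h2.trans ((Finset.sum_le_sum fun j _ => h3 j).trans (le_of_eq ?_))
    rw [← Finset.mul_sum, ← intervalIntegral.integral_finsetSum]
    · congr 1
      simp only [Finset.sum_add_distrib, ← Finset.mul_sum]
      rw [intervalIntegral.integral_add, intervalIntegral.integral_const_mul, q1]
      · apply Continuous.intervalIntegrable; fun_prop
      · apply Continuous.intervalIntegrable; fun_prop
    · intro j _
      apply Continuous.intervalIntegrable; fun_prop
  have h := hint (u / K1 β) (by positivity)
  have e : K1 β / (2 * (u / K1 β)) * (Q2 + (α ^ 2 * β + (u / K1 β) ^ 2) * u) =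
    (K1 β ^ 2 * (Q2 + α ^ 2 * β * u) / u + u ^ 2) / 2 := by
    field_simp
    ring
  rw [e] at h
  have h' : u ^ 2 ≤ K1 β ^ 2 * (Q2 + α ^ 2 * β * u) / u := by linarith
  rw [le_div_iff₀ hup] at h'
  linarith [pow_succ u 2]

lemma pointwise_aux {ι : Type*} [Fintype ι] [DecidableEq ι] {M : ℕ} (α β : ℝ) (hα : 0 < α)
    (hβ : 0 < β) (L : ℝ) (hL : L = 2 * π / α)
    (φ ψ : ι → ℝ → Fin M → ℂ)
    (hd : ∀ n j y, HasDerivAt (fun y => φ n y j) (ψ n y j) y)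
    (hc : ∀ n j, Continuous (fun y => ψ n y j))
    (hper : ∀ n, Function.Periodic (φ n) L)
    (hortho : ∀ n m, (∫ x in (0:ℝ)..L, ∑ j, φ n x j * (starRingEnd ℂ) (φ m x j)) =
      if n = m then 1 else 0)
    (x : ℝ) {A : Matrix (Fin M) (Fin M) ℂ} (hA : A.IsHermitian) (t : ℝ) :
    ∑ n, ((∑ j, A.mulVec (φ n x) j * (starRingEnd ℂ) (φ n x j)).re
        - t * (∑ j, φ n x j * (starRingEnd ℂ) (φ n x j)).re) ≤
      2 * K1 β / (3 * √3) * (∑ k, (max (hA.eigenvalues k - t) 0) ^ (3 / 2 : ℝ)) +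
      (∑ i, ∑ j, (∑ c, φ j x c * (starRingEnd ℂ) (φ i x c)) *
        ((∫ y in (0:ℝ)..L, ∑ c, ψ i y c * (starRingEnd ℂ) (ψ j y c)) +
          if i = j then ((α ^ 2 * β : ℝ) : ℂ) else 0)).re := by
  have hK := K1_pos β hβ
  set E : ι → ι → ℂ := fun i j => ((∫ y in (0:ℝ)..L, ∑ c, ψ i y c * (starRingEnd ℂ) (ψ j y c)) +
          if i = j then ((α ^ 2 * β : ℝ) : ℂ) else 0) with hE
  have hcube : ∀ k, (∑ n, ‖coef hA k (φ n x)‖ ^ 2) ^ 3 ≤ K1 β ^ 2 *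
      (∑ i, ∑ j, (starRingEnd ℂ) (coef hA k (φ i x)) * coef hA k (φ j x) * E i j).re :=
    fun k => cube_aux α β hα hβ L hL φ ψ hd hc hper hortho x hA k
  have e1 : ∑ n, ((∑ j, A.mulVec (φ n x) j * (starRingEnd ℂ) (φ n x j)).re
        - t * (∑ j, φ n x j * (starRingEnd ℂ) (φ n x j)).re) =
      ∑ k, (hA.eigenvalues k - t) * ∑ n, ‖coef hA k (φ n x)‖ ^ 2 := by
    simp only [coef_quad hA, ← coef_norm hA, Finset.mul_sum, ← Finset.sum_sub_distrib]
    rw [Finset.sum_comm]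
    simp only [sub_mul]
  have e2 : (∑ i, ∑ j, (∑ c, φ j x c * (starRingEnd ℂ) (φ i x c)) * E i j).re =
      ∑ k, (∑ i, ∑ j, (starRingEnd ℂ) (coef hA k (φ i x)) * coef hA k (φ j x) * E i j).re := by
    rw [← Complex.re_sum]
    congr 1
    rw [Finset.sum_comm (s := (Finset.univ : Finset (Fin M)))]
    refine Finset.sum_congr rfl fun i _ => ?_
    rw [Finset.sum_comm (s := (Finset.univ : Finset (Fin M)))]
    refine Finset.sum_congr rfl fun j _ => ?_
    rw [← coef_parseval hA, Finset.sum_mul]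
    refine Finset.sum_congr rfl fun c _ => ?_
    ring
  rw [e1, e2, Finset.mul_sum, ← Finset.sum_add_distrib]
  refine Finset.sum_le_sum fun k _ => ?_
  set u := ∑ n, ‖coef hA k (φ n x)‖ ^ 2 with hu
  have hu0 : 0 ≤ u := by positivity
  have h1 := young_aux (K1 β) (max (hA.eigenvalues k - t) 0) u hK (le_max_right _ _) hu0
  have h2 : (hA.eigenvalues k - t) * u ≤ max (hA.eigenvalues k - t) 0 * u := by
    gcongr; exact le_max_left _ _
  have h3 : u ^ 3 / K1 β ^ 2 ≤
      (∑ i, ∑ j, (starRingEnd ℂ) (coef hA k (φ i x)) * coef hA k (φ j x) * E i j).re := by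
    rw [div_le_iff₀ (by positivity), mul_comm]
    exact hcube k
  linarith

lemma LT1_aux {ι : Type*} [Fintype ι] [DecidableEq ι] {M : ℕ} (α β : ℝ) (hα : 0 < α)
    (hβ : 0 < β) (L : ℝ) (hL : L = 2 * π / α)
    (V : ℝ → Matrix (Fin M) (Fin M) ℂ) (hVc : Continuous V) (hV : ∀ x, (V x).PosSemidef)
    (φ ψ χ : ι → ℝ → Fin M → ℂ)
    (hd : ∀ n j y, HasDerivAt (fun y => φ n y j) (ψ n y j) y)
    (hd2 : ∀ n j y, HasDerivAt (fun y => ψ n y j) (χ n y j) y)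
    (hc2 : ∀ n j, Continuous (fun y => χ n y j))
    (hper : ∀ n, Function.Periodic (φ n) L)
    (hper2 : ∀ n, Function.Periodic (ψ n) L)
    (hortho : ∀ n m, (∫ x in (0:ℝ)..L, ∑ j, φ n x j * (starRingEnd ℂ) (φ m x j)) =
      if n = m then 1 else 0)
    (lam : ι → ℝ)
    (heig : ∀ n x j, (V x).mulVec (φ n x) j =
      - χ n x j + ((α ^ 2 * β + lam n : ℝ) : ℂ) * φ n x j) (t : ℝ) :
    ∑ n, (lam n - t) ≤ 2 * K1 β / (3 * √3) *
      ∫ x in (0:ℝ)..L, ∑ k, (max ((hV x).1.eigenvalues k - t) 0) ^ (3 / 2 : ℝ) := by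
  have hLp : 0 < L := by rw [hL]; positivity
  have hφc : ∀ n j, Continuous (fun y => φ n y j) := fun n j =>
    continuous_iff_continuousAt.2 fun y => (hd n j y).continuousAt
  have hc : ∀ n j, Continuous (fun y => ψ n y j) := fun n j =>
    continuous_iff_continuousAt.2 fun y => (hd2 n j y).continuousAt
  have hcj := Complex.continuous_conj
  set E : ι → ι → ℂ := fun i j => ((∫ y in (0:ℝ)..L, ∑ c, ψ i y c * (starRingEnd ℂ) (ψ j y c)) +
          if i = j then ((α ^ 2 * β : ℝ) : ℂ) else 0) with hE
  set P : ι → ι → ℝ → ℂ := fun i j x => ∑ c, φ i x c * (starRingEnd ℂ) (φ j x c) with hP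
  set X : ι → ℝ → ℂ := fun n x => ∑ c, χ n x c * (starRingEnd ℂ) (φ n x c) with hX
  have hPc : ∀ i j, Continuous (P i j) := fun i j => by simp only [hP]; fun_prop
  have hXc : ∀ i, Continuous (X i) := fun i => by simp only [hX]; fun_prop
  have hF := cont_eig V hVc hV (fun v => (max (v - t) 0) ^ (3 / 2 : ℝ)) (by
    apply Continuous.rpow_const
    · fun_prop
    · intro x; right; norm_num)
  set F : ℝ → ℝ := fun x => ∑ k, (max ((hV x).1.eigenvalues k - t) 0) ^ (3 / 2 : ℝ) with hFdef
  have hpt : ∀ x, ∑ n, (- (X n x).re + (α ^ 2 * β + lam n - t) * (P n n x).re) ≤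
      2 * K1 β / (3 * √3) * F x + (∑ i, ∑ j, P j i x * E i j).re := by
    intro x
    have h := pointwise_aux α β hα hβ L hL φ ψ hd hc hper hortho x (hV x).1 t
    refine le_trans (le_of_eq ?_) h
    refine Finset.sum_congr rfl fun n _ => ?_
    have : ∑ j, (V x).mulVec (φ n x) j * (starRingEnd ℂ) (φ n x j) =
        - X n x + ((α ^ 2 * β + lam n : ℝ) : ℂ) * P n n x := by
      simp only [heig, add_mul, Finset.sum_add_distrib, hX, hP, Finset.mul_sum,
        neg_mul, Finset.sum_neg_distrib, mul_assoc]
    rw [this, Complex.add_re, Complex.re_ofReal_mul, Complex.neg_re]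
    ring
  have hre : ∀ f : ℝ → ℂ, Continuous f →
      ∫ x in (0:ℝ)..L, (f x).re = (∫ x in (0:ℝ)..L, f x).re := by
    intro f hf
    exact Complex.reCLM.intervalIntegral_comp_comm (hf.intervalIntegrable 0 L)
  -- integration by parts
  have hibp : ∀ n, ∫ x in (0:ℝ)..L, X n x =
      - ∫ y in (0:ℝ)..L, ∑ c, ψ n y c * (starRingEnd ℂ) (ψ n y c) := by
    intro n
    have hG : ∀ x, HasDerivAt (fun x => ∑ c, ψ n x c * (starRingEnd ℂ) (φ n x c))
        (X n x + ∑ c, ψ n x c * (starRingEnd ℂ) (ψ n x c)) x := by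
      intro x
      simp only [hX, ← Finset.sum_add_distrib]
      apply HasDerivAt.fun_sum
      intro c _
      exact (hd2 n c x).mul (hd n c x).star
    have hcψ : Continuous fun x => ∑ c, ψ n x c * (starRingEnd ℂ) (ψ n x c) := by fun_prop
    have := intervalIntegral.integral_eq_sub_of_hasDerivAt (a := 0) (b := L)
      (fun x _ => hG x) (((hXc n).add hcψ).intervalIntegrable _ _)
    rw [intervalIntegral.integral_add ((hXc n).intervalIntegrable _ _)
      (hcψ.intervalIntegrable _ _)] at this
    have p1 : ψ n L = ψ n 0 := by simpa using hper2 n 0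
    have p2 : φ n L = φ n 0 := by simpa using hper n 0
    rw [p1, p2, sub_self] at this
    exact eq_neg_of_add_eq_zero_left this
  have hcont1 : Continuous fun x => ∑ n, (- (X n x).re + (α ^ 2 * β + lam n - t) * (P n n x).re) := by
    fun_prop
  have hcont2 : Continuous fun x => ∑ i, ∑ j, P j i x * E i j := by fun_prop
  have hcont3 : Continuous fun x => (∑ i, ∑ j, P j i x * E i j).re := by fun_prop
  have hint := intervalIntegral.integral_mono_on (a := 0) (b := L) (μ := volume) hLp.le
    (hcont1.intervalIntegrable _ _)
    (((hF.const_mul (2 * K1 β / (3 * √3))).add hcont3).intervalIntegrable _ _) (fun x _ => hpt x)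
  simp only [Pi.add_apply] at hint
  rw [intervalIntegral.integral_add ((hF.const_mul _).intervalIntegrable _ _)
    (hcont3.intervalIntegrable _ _), intervalIntegral.integral_const_mul, hre _ hcont2] at hint
  have i1 : ∫ x in (0:ℝ)..L, ∑ i, ∑ j, P j i x * E i j = ∑ i, E i i := by
    rw [intervalIntegral.integral_finsetSum]
    · refine Finset.sum_congr rfl fun i _ => ?_
      rw [intervalIntegral.integral_finsetSum]
      · simp only [intervalIntegral.integral_mul_const, hP, hortho]
        simp
      · intro j _
        apply Continuous.intervalIntegrable; fun_prop
    · intro j _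
      apply Continuous.intervalIntegrable; fun_prop
  have i2 : ∫ x in (0:ℝ)..L, ∑ n, (- (X n x).re + (α ^ 2 * β + lam n - t) * (P n n x).re) =
      ∑ n, ((E n n).re + (lam n - t)) := by
    rw [intervalIntegral.integral_finsetSum]
    · refine Finset.sum_congr rfl fun n _ => ?_
      rw [intervalIntegral.integral_add, intervalIntegral.integral_neg,
        intervalIntegral.integral_const_mul, hre _ (hXc n), hre _ (hPc n n), hibp]
      · simp only [hP, hortho, hE]
        simp only [if_true, Complex.neg_re, Complex.add_re, Complex.ofReal_re, Complex.one_re]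
        ring
      · apply Continuous.intervalIntegrable; fun_prop
      · apply Continuous.intervalIntegrable; fun_prop
    · intro j _
      apply Continuous.intervalIntegrable; fun_prop
  rw [i1, i2, Finset.sum_add_distrib, Complex.re_sum] at hint
  linarith

lemma beta_lint (a b v : ℝ) (ha : 0 < a) (hb : 1 < b) (hv : 0 ≤ v) :
    ∫⁻ t in Set.Ioi (0:ℝ), ENNReal.ofReal (t ^ (a - 1) * (max (v - t) 0) ^ (b - 1)) =
      ENNReal.ofReal (v ^ (a + b - 1) * (Real.Gamma a * Real.Gamma b / Real.Gamma (a + b))) := by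
  have hz : ∀ t, v ≤ t → t ^ (a - 1) * (max (v - t) 0) ^ (b - 1) = 0 := by
    intro t ht
    rw [max_eq_right (by linarith), Real.zero_rpow (by linarith), mul_zero]
  have hsplit : Set.Ioi (0:ℝ) = Set.Ioc 0 v ∪ Set.Ioi v := (Set.Ioc_union_Ioi_eq_Ioi hv).symm
  have hz2 : ∫⁻ t in Set.Ioi v, ENNReal.ofReal (t ^ (a - 1) * (max (v - t) 0) ^ (b - 1)) = 0 := by
    rw [setLIntegral_congr_fun (g := fun _ => 0) measurableSet_Ioi]
    · simp
    · intro t ht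
      simp only [hz t (le_of_lt ht), ENNReal.ofReal_zero]
  rw [hsplit, lintegral_union measurableSet_Ioi (Set.Ioc_disjoint_Ioi le_rfl), hz2, add_zero]
  rcases hv.eq_or_lt with h0 | hvp
  · rw [← h0]
    rw [Real.zero_rpow (by linarith)]
    simp
  have hGa := Real.Gamma_pos_of_pos ha
  have hGb := Real.Gamma_pos_of_pos (by linarith : 0 < b)
  have hGab := Real.Gamma_pos_of_pos (by linarith : 0 < a + b)
  have hreal : ∫ t in Set.Ioc 0 v, t ^ (a - 1) * (max (v - t) 0) ^ (b - 1) =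
      v ^ (a + b - 1) * (Real.Gamma a * Real.Gamma b / Real.Gamma (a + b)) := by
    have h := Complex.betaIntegral_scaled a b hvp
    rw [Complex.betaIntegral_eq_Gamma_mul_div _ _ (by simpa using ha)
      (by simp only [Complex.ofReal_re]; linarith)] at h
    apply Complex.ofReal_injective
    rw [← intervalIntegral.integral_of_le hv, ← intervalIntegral.integral_ofReal]
    push_cast [Complex.ofReal_cpow hv, ← Complex.Gamma_ofReal]
    rw [← h]
    apply intervalIntegral.integral_congr
    intro t ht
    rw [Set.uIcc_of_le hv] at ht
    simp only
    rw [max_eq_left (by linarith [ht.2]), Complex.ofReal_cpow ht.1,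
      Complex.ofReal_cpow (by linarith [ht.2])]
    push_cast
    rfl
  have hint : IntegrableOn (fun t => t ^ (a - 1) * (max (v - t) 0) ^ (b - 1)) (Set.Ioc 0 v) := by
    apply MeasureTheory.Integrable.of_integral_ne_zero
    rw [hreal]
    positivity
  rw [← hreal, ofReal_integral_eq_lintegral_ofReal hint]
  filter_upwards [ae_restrict_mem measurableSet_Ioc] with t ht
  have := ht.1
  have : 0 ≤ max (v - t) 0 := le_max_right _ _
  simp only [Pi.zero_apply]
  positivity

lemma lift_aux {M N : ℕ} (L : ℝ) (hLp : 0 < L) (c : ℝ) (hc : 0 ≤ c) (γ : ℝ) (hγ : 1 < γ)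
    (V : ℝ → Matrix (Fin M) (Fin M) ℂ) (hVc : Continuous V) (hV : ∀ x, (V x).PosSemidef)
    (lam : Fin N → ℝ) (hlam : ∀ n, 0 < lam n)
    (h : ∀ t, ∑ n, max (lam n - t) 0 ≤ c *
      ∫ x in (0:ℝ)..L, ∑ k, (max ((hV x).1.eigenvalues k - t) 0) ^ (3 / 2 : ℝ)) :
    (∑ n, lam n ^ γ) * (Real.Gamma (γ - 1) * Real.Gamma 2 / Real.Gamma (γ + 1)) ≤
      c * (Real.Gamma (γ - 1) * Real.Gamma (5 / 2) / Real.Gamma (γ + 3 / 2)) *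
      ∫ x in (0:ℝ)..L, ∑ i, (hV x).1.eigenvalues i ^ (γ + 1 / 2) := by
  set v : ℝ → Fin M → ℝ := fun x => (hV x).1.eigenvalues with hvdef
  have hv0 : ∀ x k, 0 ≤ v x k := fun x k => (hV x).eigenvalues_nonneg k
  have hF : ∀ t, Continuous fun x => ∑ k, (max (v x k - t) 0) ^ (3 / 2 : ℝ) := fun t =>
    cont_eig V hVc hV (fun v => (max (v - t) 0) ^ (3 / 2 : ℝ)) (by
      apply Continuous.rpow_const
      · fun_prop
      · intro x; right; norm_num)
  have hF2 : ∀ x, Continuous fun t => ∑ k, (max (v x k - t) 0) ^ (3 / 2 : ℝ) := fun x => by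
    refine continuous_finsetSum _ fun k _ => ?_
    apply Continuous.rpow_const
    · fun_prop
    · intro x; right; norm_num
  have hR : Continuous fun x => ∑ k, v x k ^ (γ + 1 / 2) :=
    cont_eig V hVc hV (fun v => v ^ (γ + 1 / 2)) (by
      apply Continuous.rpow_const
      · fun_prop
      · intro x; right; linarith)
  set B1 := Real.Gamma (γ - 1) * Real.Gamma 2 / Real.Gamma (γ + 1) with hB1
  set B2 := Real.Gamma (γ - 1) * Real.Gamma (5 / 2) / Real.Gamma (γ + 3 / 2) with hB2
  have hB1p : 0 < B1 := by
    have h1 := Real.Gamma_pos_of_pos (by linarith : 0 < γ - 1)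
    have h2 := Real.Gamma_pos_of_pos (by linarith : 0 < γ + 1)
    have h3 := Real.Gamma_pos_of_pos (by norm_num : (0:ℝ) < 2)
    positivity
  have hB2p : 0 < B2 := by
    have h1 := Real.Gamma_pos_of_pos (by linarith : 0 < γ - 1)
    have h2 := Real.Gamma_pos_of_pos (by linarith : 0 < γ + 3 / 2)
    have h3 := Real.Gamma_pos_of_pos (by norm_num : (0:ℝ) < 5 / 2)
    positivity
  have b1 : ∀ l, 0 ≤ l → ∫⁻ t in Set.Ioi (0:ℝ), ENNReal.ofReal (t ^ (γ - 2) * max (l - t) 0) =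
      ENNReal.ofReal (l ^ γ * B1) := by
    intro l hl
    have := beta_lint (γ - 1) 2 l (by linarith) (by norm_num) hl
    rw [show γ - 1 - 1 = γ - 2 by ring, show (2:ℝ) - 1 = 1 by norm_num,
      show γ - 1 + 2 - 1 = γ by ring, show γ - 1 + 2 = γ + 1 by ring] at this
    simpa only [Real.rpow_one] using this
  have b2 : ∀ l, 0 ≤ l → ∫⁻ t in Set.Ioi (0:ℝ),
      ENNReal.ofReal (t ^ (γ - 2) * max (l - t) 0 ^ (3 / 2 : ℝ)) =
      ENNReal.ofReal (l ^ (γ + 1 / 2) * B2) := by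
    intro l hl
    have := beta_lint (γ - 1) (5 / 2) l (by linarith) (by norm_num) hl
    rwa [show γ - 1 - 1 = γ - 2 by ring, show (5 / 2:ℝ) - 1 = 3 / 2 by norm_num,
      show γ - 1 + 5 / 2 - 1 = γ + 1 / 2 by ring, show γ - 1 + 5 / 2 = γ + 3 / 2 by ring] at this
  have hI0 : 0 ≤ ∫ x in (0:ℝ)..L, ∑ i, v x i ^ (γ + 1 / 2) :=
    intervalIntegral.integral_nonneg hLp.le fun x _ =>
      Finset.sum_nonneg fun k _ => Real.rpow_nonneg (hv0 x k) _
  have hmeas : Measurable (fun p : ℝ × ℝ => ∑ k, (max (v p.2 k - p.1) 0) ^ (3 / 2 : ℝ)) := by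
    have := measurable_uncurry_of_continuous_of_measurable
      (u := fun (t : ℝ) (x : ℝ) => ∑ k, (max (v x k - t) 0) ^ (3 / 2 : ℝ))
      (fun x => hF2 x) (fun t => (hF t).measurable)
    exact this
  have hFnn : ∀ t x, 0 ≤ ∑ k, (max (v x k - t) 0) ^ (3 / 2 : ℝ) := fun t x =>
    Finset.sum_nonneg fun k _ => Real.rpow_nonneg (le_max_right _ _) _
  rw [← ENNReal.ofReal_le_ofReal_iff (by positivity)]
  calc ENNReal.ofReal ((∑ n, lam n ^ γ) * B1)
      = ∑ n, ENNReal.ofReal (lam n ^ γ * B1) := by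
        rw [Finset.sum_mul, ENNReal.ofReal_sum_of_nonneg]
        intro n _
        have := hlam n
        positivity
    _ = ∑ n, ∫⁻ t in Set.Ioi (0:ℝ), ENNReal.ofReal (t ^ (γ - 2) * max (lam n - t) 0) := by
        refine Finset.sum_congr rfl fun n _ => (b1 _ (hlam n).le).symm
    _ = ∫⁻ t in Set.Ioi (0:ℝ), ∑ n, ENNReal.ofReal (t ^ (γ - 2) * max (lam n - t) 0) := by
        rw [lintegral_finsetSum]
        intro n _
        fun_prop
    _ ≤ ∫⁻ t in Set.Ioi (0:ℝ), ∫⁻ x in Set.Ioc 0 L, ENNReal.ofReal (c * (t ^ (γ - 2) *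
          ∑ k, (max (v x k - t) 0) ^ (3 / 2 : ℝ))) := by
        apply setLIntegral_mono' measurableSet_Ioi
        intro t ht
        have ht' : 0 < t := ht
        have htp : 0 ≤ t ^ (γ - 2) := by positivity
        have hcI : IntegrableOn (fun x => c * (t ^ (γ - 2) *
          ∑ k, (max (v x k - t) 0) ^ (3 / 2 : ℝ))) (Set.Ioc 0 L) :=
          (((hF t).const_mul _).const_mul _).integrableOn_Ioc
        rw [← ofReal_integral_eq_lintegral_ofReal hcI
          (Filter.Eventually.of_forall fun x => mul_nonneg hc (mul_nonneg htp (hFnn t x))),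
          ← ENNReal.ofReal_sum_of_nonneg
            (fun n _ => mul_nonneg htp (le_max_right _ _))]
        apply ENNReal.ofReal_le_ofReal
        rw [← intervalIntegral.integral_of_le hLp.le, intervalIntegral.integral_const_mul,
          intervalIntegral.integral_const_mul, ← Finset.mul_sum]
        calc _ ≤ t ^ (γ - 2) * (c * ∫ x in (0:ℝ)..L, ∑ k, (max (v x k - t) 0) ^ (3 / 2 : ℝ)) := by
              gcongr; exact h t
          _ = _ := by ring
    _ = ∫⁻ x in Set.Ioc 0 L, ∫⁻ t in Set.Ioi (0:ℝ), ENNReal.ofReal (c * (t ^ (γ - 2) *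
          ∑ k, (max (v x k - t) 0) ^ (3 / 2 : ℝ))) := by
        apply lintegral_lintegral_swap
        apply Measurable.aemeasurable
        apply ENNReal.measurable_ofReal.comp
        apply Measurable.const_mul
        apply Measurable.mul _ hmeas
        fun_prop
    _ = ∫⁻ x in Set.Ioc 0 L, ENNReal.ofReal (c * B2 * ∑ k, v x k ^ (γ + 1 / 2)) := by
        refine lintegral_congr fun x => ?_
        have hcongr : ∫⁻ t in Set.Ioi (0:ℝ), ENNReal.ofReal (c * (t ^ (γ - 2) *
            ∑ k, (max (v x k - t) 0) ^ (3 / 2 : ℝ))) = ∫⁻ t in Set.Ioi (0:ℝ), ENNReal.ofReal c *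
            ∑ k, ENNReal.ofReal (t ^ (γ - 2) * (max (v x k - t) 0) ^ (3 / 2 : ℝ)) := by
          apply setLIntegral_congr_fun measurableSet_Ioi
          intro t ht
          have ht' : 0 < t := ht
          have htp : 0 ≤ t ^ (γ - 2) := by positivity
          simp only
          rw [ENNReal.ofReal_mul hc, Finset.mul_sum, ENNReal.ofReal_sum_of_nonneg]
          exact fun k _ => mul_nonneg htp (Real.rpow_nonneg (le_max_right _ _) _)
        rw [hcongr, lintegral_const_mul, lintegral_finsetSum]
        · simp only [b2 _ (hv0 x _)]
          rw [← ENNReal.ofReal_sum_of_nonneg, ← ENNReal.ofReal_mul hc, ← Finset.sum_mul]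
          · congr 1; ring
          · exact fun k _ => mul_nonneg (Real.rpow_nonneg (hv0 x k) _) hB2p.le
        · intro k _
          fun_prop
        · fun_prop
    _ = ENNReal.ofReal (c * B2 * ∫ x in (0:ℝ)..L, ∑ i, v x i ^ (γ + 1 / 2)) := by
        rw [← ofReal_integral_eq_lintegral_ofReal, ← intervalIntegral.integral_of_le hLp.le,
          intervalIntegral.integral_const_mul]
        · exact (hR.const_mul _).integrableOn_Ioc
        · exact Filter.Eventually.of_forall fun x => mul_nonneg (by positivity)
            (Finset.sum_nonneg fun k _ => Real.rpow_nonneg (hv0 x k) _)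

lemma Gamma_five_half : Real.Gamma (5 / 2) = 3 / 4 * √π := by
  have h1 := Real.Gamma_add_one (by norm_num : (1 / 2 : ℝ) ≠ 0)
  have h2 := Real.Gamma_add_one (by norm_num : (3 / 2 : ℝ) ≠ 0)
  rw [show (1 / 2 : ℝ) + 1 = 3 / 2 by norm_num, Real.Gamma_one_half_eq] at h1
  rw [show (3 / 2 : ℝ) + 1 = 5 / 2 by norm_num, h1] at h2
  rw [h2]; ring

theorem stmt_15 (α β : ℝ) (hα : 0 < α) (hβ : 0 < β) (L : ℝ) (hL : L = 2 * π / α)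
    (γ : ℝ) (hγ : 1 ≤ γ) (M N : ℕ) (hM : 1 ≤ M)
    (V : ℝ → Matrix (Fin M) (Fin M) ℂ) (hVc : Continuous V)
    (hVper : Function.Periodic V L) (hV : ∀ x, (V x).PosSemidef)
    (φ : Fin N → ℝ → Fin M → ℂ) (hφ : ∀ n, ContDiff ℝ 2 (φ n))
    (hper : ∀ n, Function.Periodic (φ n) L)
    (hortho : ∀ n m, (∫ x in (0:ℝ)..L, ∑ j, φ n x j * (starRingEnd ℂ) (φ m x j)) =
      if n = m then 1 else 0)
    (lam : Fin N → ℝ) (hlam : ∀ n, 0 < lam n)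
    (heig : ∀ n x, -(deriv (deriv (φ n)) x) + (α ^ 2 * β) • φ n x - (V x).mulVec (φ n x) =
      (-(lam n)) • φ n x) :
    ∑ n, lam n ^ γ ≤ (π / Real.sqrt 3) * K1 β *
      (Real.Gamma (γ + 1) / (2 * Real.sqrt π * Real.Gamma (γ + 3 / 2))) *
      ∫ x in (0:ℝ)..L, ∑ i, (hV x).1.eigenvalues i ^ (γ + 1 / 2) := by
  have hLp : 0 < L := by rw [hL]; positivity
  have hK := K1_pos β hβ
  have hdiff : ∀ n, Differentiable ℝ (φ n) := fun n => (hφ n).differentiable (by norm_num)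
  have hcd1 : ∀ n, ContDiff ℝ 1 (deriv (φ n)) := fun n => by
    have h2 : ContDiff ℝ (1 + 1) (φ n) := by
      have := hφ n
      norm_num
      exact this
    exact (contDiff_succ_iff_deriv.1 h2).2.2
  have hd : ∀ n j y, HasDerivAt (fun y => φ n y j) (deriv (φ n) y j) y := fun n j y =>
    hasDerivAt_pi.1 (hdiff n y).hasDerivAt j
  have hd2 : ∀ n j y, HasDerivAt (fun y => deriv (φ n) y j) (deriv (deriv (φ n)) y j) y :=
    fun n j y => hasDerivAt_pi.1 (((hcd1 n).differentiable (by norm_num)) y).hasDerivAt j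
  have hc2 : ∀ n j, Continuous (fun y => deriv (deriv (φ n)) y j) := fun n j =>
    (continuous_apply j).comp ((hcd1 n).continuous_deriv (by norm_num))
  have hper2 : ∀ n, Function.Periodic (deriv (φ n)) L := by
    intro n x
    have h1 : HasDerivAt (fun y => φ n (y + L)) (deriv (φ n) (x + L)) x :=
      (hdiff n (x+L)).hasDerivAt.comp_add_const x L
    have h2 : (fun y => φ n (y + L)) = φ n := funext (hper n)
    rw [h2] at h1
    exact h1.unique (hdiff n x).hasDerivAt
  have heig' : ∀ n x j, (V x).mulVec (φ n x) j =
      - deriv (deriv (φ n)) x j + ((α ^ 2 * β + lam n : ℝ) : ℂ) * φ n x j := by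
    intro n x j
    have := congrFun (heig n x) j
    simp only [Pi.sub_apply, Pi.add_apply, Pi.neg_apply, Pi.smul_apply, Complex.real_smul] at this
    push_cast at this ⊢
    linear_combination -this
  have hLT : ∀ t, ∑ n, max (lam n - t) 0 ≤ 2 * K1 β / (3 * √3) *
      ∫ x in (0:ℝ)..L, ∑ k, (max ((hV x).1.eigenvalues k - t) 0) ^ (3 / 2 : ℝ) := by
    intro t
    have h := LT1_aux (ι := {n : Fin N // t < lam n}) α β hα hβ L hL V hVc hV
      (fun n => φ n) (fun n => deriv (φ n)) (fun n => deriv (deriv (φ n)))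
      (fun n => hd n) (fun n => hd2 n) (fun n => hc2 n) (fun n => hper n) (fun n => hper2 n)
      (fun n m => by
        rw [hortho]
        simp only [Subtype.ext_iff])
      (fun n => lam n) (fun n => heig' n) t
    refine le_trans (le_of_eq ?_) h
    have e : ∀ n, max (lam n - t) 0 = if t < lam n then lam n - t else 0 := by
      intro n
      split_ifs with hn
      · exact max_eq_left (by linarith)
      · exact max_eq_right (by linarith)
    simp only [e]
    rw [← Finset.sum_filter]
    exact Finset.sum_subtype _ (by simp) _
  have h3p : 0 < √3 := by positivity
  have hpp : 0 < √π := by positivity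
  have hpi : √π ^ 2 = π := Real.sq_sqrt pi_pos.le
  rcases hγ.eq_or_lt with h1 | h1
  · subst h1
    have h := hLT 0
    have hconst : π / √3 * K1 β * (Real.Gamma (1 + 1) / (2 * √π * Real.Gamma (1 + 3 / 2))) =
        2 * K1 β / (3 * √3) := by
      rw [show (1:ℝ) + 1 = 2 by norm_num, show (1:ℝ) + 3 / 2 = 5 / 2 by norm_num,
        Gamma_five_half, Real.Gamma_two]
      field_simp
      rw [hpi]
      ring
    rw [hconst]
    refine le_trans (le_of_eq ?_) (h.trans (le_of_eq ?_))
    · refine Finset.sum_congr rfl fun n _ => ?_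
      rw [Real.rpow_one, sub_zero, max_eq_left (hlam n).le]
    · congr 1
      apply intervalIntegral.integral_congr
      intro x _
      refine Finset.sum_congr rfl fun k _ => ?_
      rw [sub_zero, max_eq_left ((hV x).eigenvalues_nonneg k)]
      norm_num
  · have h := lift_aux L hLp (2 * K1 β / (3 * √3)) (by positivity) γ h1 V hVc hV lam hlam hLT
    set I := ∫ x in (0:ℝ)..L, ∑ i, (hV x).1.eigenvalues i ^ (γ + 1 / 2) with hI
    have g1 := Real.Gamma_pos_of_pos (by linarith : 0 < γ - 1)
    have g2 := Real.Gamma_pos_of_pos (by linarith : 0 < γ + 1)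
    have g3 := Real.Gamma_pos_of_pos (by linarith : 0 < γ + 3 / 2)
    rw [Gamma_five_half, Real.Gamma_two, mul_one] at h
    rw [← le_div_iff₀ (by positivity)] at h
    refine h.trans (le_of_eq ?_)
    field_simp
    rw [hpi]
    ring
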